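/- Let f : ℝⁿ → ℝ≥0 be an integrable function whose support K has diameter D < ∞, and suppose that for every line L and every nonnegative affine function l on K ∩ L, the function x ↦ f(x) l(x)^{n-1} is unimodal along L. Then for every partition ℝⁿ = S₁ ∪ S₂ ∪ S₃ into measurable sets, π_f(S₃) ≥ (d(S₁,S₂)/D) · min{π_f(S₁), π_f(S₂)}, where π_f is the probability measure with density proportional to f and d(S₁,S₂) is the minimum distance between S₁ and S₂. -/

import Mathlib

/-!
The inequality is reduced to dimension one by the localization method of Lovász and Simonovits. If
it fails, then for a slightly smaller distance `δ` both `δ • 1_{Sᵢ} f - D • 1_{S₃} f`, `i = 1, 2`,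
have positive integral over a ball containing the support of `f`. A hyperplane through a prescribed
codimension-two subspace can be rotated until it halves the first integral, and one of its two sides
then keeps both integrals positive. Repeating this for countably many subspaces cuts the ball down
to compact convex sets that shrink to a segment, so that eventually distances in them are measured
by a single coordinate up to a small error.

The hypothesis on `f` says that `f` is `-1 / (n - 1)`-concave. By the Borell–Brascamp–Lieb
inequality, applied one coordinate at a time, the projection of `f` restricted to a convex set onto
a line has a quasi-concave density. For such a density on the line every superlevel set is an
interval. At levels below both suprema over the two projected sets it contains the gap between them,
so the gap carries mass at least `δ` times the smaller supremum, whereas each of the two sets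
carries at most `D` times its own supremum.
-/

open Set MeasureTheory

section Quasiconcave

open scoped ENNReal

lemma aemeasurable_of_quasiconcaveOn {E : Type*} [NormedAddCommGroup E] [NormedSpace ℝ E]
    [FiniteDimensional ℝ E] [MeasurableSpace E] [BorelSpace E] (μ : Measure E)
    [μ.IsAddHaarMeasure] {f : E → ℝ≥0∞} (hf : QuasiconcaveOn ℝ univ f) : AEMeasurable f μ := by
  have hmeas : @Measurable (NullMeasurableSpace E μ) _ _ _ f :=
    measurable_of_Ici fun c ↦ by
      have hconv : Convex ℝ (f ⁻¹' Ici c) := by simpa using! hf c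
      exact hconv.nullMeasurableSet μ
  exact NullMeasurable.aemeasurable fun s hs ↦ hmeas hs

lemma measurable_of_quasiconcaveOn {F : ℝ → ℝ≥0∞} (hF : QuasiconcaveOn ℝ univ F) :
    Measurable F :=
  measurable_of_Ici fun c ↦ by
    have hconv : Convex ℝ (F ⁻¹' Ici c) := by simpa using! hF c
    exact hconv.ordConnected.measurableSet

lemma le_volume_compl_union_inter {T₁ T₂ J : Set ℝ} (h₁ : IsClosed T₁) (h₂ : IsClosed T₂)
    {δ : ℝ≥0∞} (hsep : ∀ s ∈ T₁, ∀ t ∈ T₂, δ ≤ edist s t) (hJ : J.OrdConnected)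
    (hJ₁ : (T₁ ∩ J).Nonempty) (hJ₂ : (T₂ ∩ J).Nonempty) : δ ≤ volume ((T₁ ∪ T₂)ᶜ ∩ J) := by
  obtain ⟨s, hs, hsJ⟩ := hJ₁
  obtain ⟨t, ht, htJ⟩ := hJ₂
  wlog hst : s ≤ t generalizing T₁ T₂ s t
  · rw [union_comm]
    exact this h₂ h₁ (fun u hu v hv ↦ edist_comm u v ▸ hsep v hv u hu) t ht htJ s hs hsJ
      (le_of_not_ge hst)
  obtain ⟨a, ⟨ha, hsa, hat⟩, hamax⟩ :=
    (isCompact_Icc.inter_left h₁).exists_isGreatest ⟨s, hs, le_rfl, hst⟩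
  obtain ⟨b, ⟨hb, hab, hbt⟩, hbmin⟩ :=
    (isCompact_Icc.inter_left h₂).exists_isLeast ⟨t, ht, hat, le_rfl⟩
  have hgap : Ioo a b ⊆ (T₁ ∪ T₂)ᶜ ∩ J := by
    rintro x ⟨hax, hxb⟩
    have hxt : x ≤ t := hxb.le.trans hbt
    refine ⟨?_, hJ.out hsJ htJ ⟨hsa.trans hax.le, hxt⟩⟩
    rintro (hx | hx)
    · exact hax.not_ge (hamax ⟨hx, hsa.trans hax.le, hxt⟩)
    · exact hxb.not_ge (hbmin ⟨hx, hax.le, hxt⟩)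
  calc δ ≤ edist b a := edist_comm a b ▸ hsep a ha b hb
    _ = volume (Ioo a b) := by
      rw [Real.volume_Ioo, edist_dist, Real.dist_eq, abs_of_nonneg (sub_nonneg.2 hab)]
    _ ≤ volume ((T₁ ∪ T₂)ᶜ ∩ J) := measure_mono hgap

lemma setLIntegral_le_iSup_mul_measure_support {α : Type*} [MeasurableSpace α] {μ : Measure α}
    {F : α → ℝ≥0∞} (hF : Measurable F) {T : Set α} (hT : MeasurableSet T) :
    ∫⁻ t in T, F t ∂μ ≤ (⨆ t ∈ T, F t) * μ (Function.support F) :=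
  calc ∫⁻ t in T, F t ∂μ
      ≤ ∫⁻ t in T, (Function.support F).indicator (fun _ ↦ ⨆ t ∈ T, F t) t ∂μ := by
        refine setLIntegral_mono' hT fun t ht ↦ ?_
        by_cases h : F t = 0
        · simp [h]
        · rw [indicator_of_mem (Function.mem_support.2 h)]
          exact le_biSup F ht
    _ ≤ ∫⁻ t, (Function.support F).indicator (fun _ ↦ ⨆ t ∈ T, F t) t ∂μ :=
        setLIntegral_le_lintegral _ _
    _ = (⨆ t ∈ T, F t) * μ (Function.support F) :=
        lintegral_indicator_const (measurableSet_support hF) _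

lemma mul_min_iSup_le_setLIntegral_of_quasiconcaveOn {F : ℝ → ℝ≥0∞}
    (hF : QuasiconcaveOn ℝ univ F) {T₁ T₂ : Set ℝ} (h₁ : IsClosed T₁) (h₂ : IsClosed T₂)
    {δ : ℝ≥0∞} (hsep : ∀ s ∈ T₁, ∀ t ∈ T₂, δ ≤ edist s t) :
    δ * min (⨆ t ∈ T₁, F t) (⨆ t ∈ T₂, F t) ≤ ∫⁻ t in (T₁ ∪ T₂)ᶜ, F t := by
  refine ENNReal.mul_le_of_forall_lt fun δ' hδ' r hr ↦ ?_
  obtain ⟨s, hs, hrs⟩ := lt_biSup_iff.1 (hr.trans_le (min_le_left _ _))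
  obtain ⟨t, ht, hrt⟩ := lt_biSup_iff.1 (hr.trans_le (min_le_right _ _))
  have hconv : Convex ℝ {x | r ≤ F x} := by simpa using hF r
  have hgap := le_volume_compl_union_inter h₁ h₂ hsep hconv.ordConnected
    ⟨s, hs, hrs.le⟩ ⟨t, ht, hrt.le⟩
  have hmeas := measurable_of_quasiconcaveOn hF
  calc δ' * r ≤ volume ((T₁ ∪ T₂)ᶜ ∩ {x | r ≤ F x}) * r := by gcongr; exact hδ'.le.trans hgap
    _ = r * (volume.restrict (T₁ ∪ T₂)ᶜ) {x | r ≤ F x} := by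
      rw [mul_comm, inter_comm, Measure.restrict_apply (measurableSet_le measurable_const hmeas)]
    _ ≤ ∫⁻ t in (T₁ ∪ T₂)ᶜ, F t := mul_meas_ge_le_lintegral hmeas r

theorem mul_min_setLIntegral_le_of_quasiconcaveOn {F : ℝ → ℝ≥0∞} (hF : QuasiconcaveOn ℝ univ F)
    {T₁ T₂ : Set ℝ} (h₁ : IsClosed T₁) (h₂ : IsClosed T₂) {δ : ℝ≥0∞}
    (hsep : ∀ s ∈ T₁, ∀ t ∈ T₂, δ ≤ edist s t) :
    δ * min (∫⁻ t in T₁, F t) (∫⁻ t in T₂, F t)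
      ≤ volume (Function.support F) * ∫⁻ t in (T₁ ∪ T₂)ᶜ, F t := by
  have hmeas := measurable_of_quasiconcaveOn hF
  calc δ * min (∫⁻ t in T₁, F t) (∫⁻ t in T₂, F t)
      ≤ δ * min ((⨆ t ∈ T₁, F t) * volume (Function.support F))
          ((⨆ t ∈ T₂, F t) * volume (Function.support F)) := by
        gcongr
        · exact setLIntegral_le_iSup_mul_measure_support hmeas h₁.measurableSet
        · exact setLIntegral_le_iSup_mul_measure_support hmeas h₂.measurableSet
    _ = volume (Function.support F) * (δ * min (⨆ t ∈ T₁, F t) (⨆ t ∈ T₂, F t)) := by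
        rw [min_mul_mul_right]; ring
    _ ≤ volume (Function.support F) * ∫⁻ t in (T₁ ∪ T₂)ᶜ, F t := by
        gcongr
        exact mul_min_iSup_le_setLIntegral_of_quasiconcaveOn hF h₁ h₂ hsep

end Quasiconcave

section BrunnMinkowski

open scoped ENNReal NNReal Pointwise

lemma volume_add_volume_le_volume_add_of_isCompact {K L : Set ℝ} (hK : IsCompact K)
    (hL : IsCompact L) (hKn : K.Nonempty) (hLn : L.Nonempty) :
    volume K + volume L ≤ volume (K + L) := by
  obtain ⟨k, hk, hkmax⟩ := hK.exists_isGreatest hKn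
  obtain ⟨l, hl, hlmin⟩ := hL.exists_isLeast hLn
  have hsub : (l +ᵥ K) ∪ (k +ᵥ L) ⊆ K + L := by
    rintro _ (⟨s, hs, rfl⟩ | ⟨t, ht, rfl⟩)
    · exact ⟨s, hs, l, hl, add_comm s l⟩
    · exact ⟨k, hk, t, ht, rfl⟩
  -- The translates lie on opposite sides of `k + l`.
  have hdisj : AEDisjoint volume (l +ᵥ K) (k +ᵥ L) := by
    refine measure_mono_null (t := {k + l}) ?_ (measure_singleton _)
    rintro _ ⟨⟨s, hs, rfl⟩, ⟨t, ht, hst⟩⟩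
    have hsk := hkmax hs
    have hlt := hlmin ht
    simp only [vadd_eq_add, mem_singleton_iff] at hst ⊢
    linarith
  calc volume K + volume L = volume (l +ᵥ K) + volume (k +ᵥ L) := by simp only [measure_vadd]
    _ = volume ((l +ᵥ K) ∪ (k +ᵥ L)) :=
      (measure_union₀ (hL.vadd k).measurableSet.nullMeasurableSet hdisj).symm
    _ ≤ volume (K + L) := measure_mono hsub

lemma volume_add_volume_le_volume_add {A B : Set ℝ} (hA : MeasurableSet A) (hB : MeasurableSet B)
    (hAn : A.Nonempty) (hBn : B.Nonempty) : volume A + volume B ≤ volume (A + B) := by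
  obtain ⟨a, ha⟩ := hAn
  obtain ⟨b, hb⟩ := hBn
  rw [hA.measure_eq_iSup_isCompact, hB.measure_eq_iSup_isCompact]
  simp only [iSup_and']
  refine ENNReal.biSup_add_biSup_le' ⟨∅, empty_subset _, isCompact_empty⟩
    ⟨∅, empty_subset _, isCompact_empty⟩ fun K ⟨hKA, hK⟩ L ⟨hLB, hL⟩ ↦ ?_
  calc volume K + volume L ≤ volume (insert a K) + volume (insert b L) := by
        gcongr <;> exact subset_insert _ _
    _ ≤ volume (insert a K + insert b L) :=
        volume_add_volume_le_volume_add_of_isCompact (hK.insert a) (hL.insert b)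
          (insert_nonempty _ _) (insert_nonempty _ _)
    _ ≤ volume (A + B) :=
        measure_mono (add_subset_add (insert_subset ha hKA) (insert_subset hb hLB))

lemma volume_setOf_pos_ofReal_lt (y : ℝ≥0∞) :
    volume {t : ℝ | 0 < t ∧ ENNReal.ofReal t < y} = y := by
  induction y with
  | top =>
    have : {t : ℝ | 0 < t ∧ ENNReal.ofReal t < ∞} = Ioi 0 := by ext; simp
    rw [this, Real.volume_Ioi]
  | coe y =>
    have : {t : ℝ | 0 < t ∧ ENNReal.ofReal t < y} = Ioo 0 (y : ℝ) := by
      ext t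
      refine and_congr_right fun ht ↦ ?_
      rw [← ENNReal.ofReal_coe_nnreal, ENNReal.ofReal_lt_ofReal_iff_of_nonneg ht.le]
    rw [this, Real.volume_Ioo, sub_zero, ENNReal.ofReal_coe_nnreal]

lemma lintegral_eq_lintegral_measure_ofReal_lt {α : Type*} [MeasurableSpace α] {μ : Measure α}
    [SFinite μ] {u : α → ℝ≥0∞} (hu : Measurable u) :
    ∫⁻ x, u x ∂μ = ∫⁻ t in Ioi (0 : ℝ), μ {x | ENNReal.ofReal t < u x} := by
  have hmeas : MeasurableSet {z : α × ℝ | 0 < z.2 ∧ ENNReal.ofReal z.2 < u z.1} :=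
    (measurableSet_lt measurable_const measurable_snd).inter
      (measurableSet_lt measurable_snd.ennreal_ofReal (hu.comp measurable_fst))
  calc ∫⁻ x, u x ∂μ = ∫⁻ x, volume {t : ℝ | 0 < t ∧ ENNReal.ofReal t < u x} ∂μ := by
        simp only [volume_setOf_pos_ofReal_lt]
    _ = ∫⁻ t, μ {x | 0 < t ∧ ENNReal.ofReal t < u x} :=
        (Measure.prod_apply hmeas).symm.trans (Measure.prod_apply_symm hmeas)
    _ = ∫⁻ t in Ioi (0 : ℝ), μ {x | ENNReal.ofReal t < u x} := by
        rw [← lintegral_indicator measurableSet_Ioi]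
        refine lintegral_congr fun t ↦ ?_
        by_cases ht : 0 < t <;> simp [ht]

lemma measurable_measure_ofReal_lt {α : Type*} [MeasurableSpace α] (μ : Measure α)
    (u : α → ℝ≥0∞) : Measurable fun t : ℝ ↦ μ {x | ENNReal.ofReal t < u x} :=
  Antitone.measurable fun _ _ hst ↦
    measure_mono fun _ hx ↦ (ENNReal.ofReal_le_ofReal hst).trans_lt hx

lemma mul_lintegral_add_mul_lintegral_le {u v w : ℝ → ℝ≥0∞} (hu : Measurable u)
    (hv : Measurable v) (hw : Measurable w) (hsup : ⨆ s, u s = ⨆ t, v t) (a b : ℝ≥0)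
    (huvw : ∀ s t : ℝ, min (u s) (v t) ≤ w (a • s + b • t)) :
    a * (∫⁻ s, u s) + b * (∫⁻ t, v t) ≤ ∫⁻ s, w s := by
  rw [lintegral_eq_lintegral_measure_ofReal_lt hu, lintegral_eq_lintegral_measure_ofReal_lt hv,
    lintegral_eq_lintegral_measure_ofReal_lt hw,
    ← lintegral_const_mul _ (measurable_measure_ofReal_lt _ u),
    ← lintegral_const_mul _ (measurable_measure_ofReal_lt _ v),
    ← lintegral_add_left ((measurable_measure_ofReal_lt _ u).const_mul _)]
  refine lintegral_mono fun τ ↦ ?_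
  set A := {s | ENNReal.ofReal τ < u s}
  set B := {t | ENNReal.ofReal τ < v t}
  have hAB : A.Nonempty ↔ B.Nonempty := by
    have h := lt_iSup_iff (f := u) (a := ENNReal.ofReal τ)
    rw [hsup, lt_iSup_iff] at h
    exact h.symm
  have hsub : a • A + b • B ⊆ {x | ENNReal.ofReal τ < w x} := by
    rintro _ ⟨_, ⟨s, hs, rfl⟩, _, ⟨t, ht, rfl⟩, rfl⟩
    exact (lt_min hs ht).trans_le (huvw s t)
  have hmA : MeasurableSet A := measurableSet_lt measurable_const hu
  have hmB : MeasurableSet B := measurableSet_lt measurable_const hv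
  rcases A.eq_empty_or_nonempty with hA | hA
  · have hB : B = ∅ := by rwa [← not_nonempty_iff_eq_empty, ← hAB, not_nonempty_iff_eq_empty]
    simp [hA, hB]
  calc a * volume A + b * volume B = volume (a • A) + volume (b • B) := by
        simp only [Measure.addHaar_nnreal_smul, Module.finrank_self, pow_one]
    _ ≤ volume (a • A + b • B) :=
        volume_add_volume_le_volume_add (hmA.const_smul₀ (a : ℝ)) (hmB.const_smul₀ (b : ℝ))
          hA.smul_set (hAB.1 hA).smul_set
    _ ≤ volume {x | ENNReal.ofReal τ < w x} := measure_mono hsub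

lemma add_pow_succ_le_mul_add_pow (k : ℕ) (a b c d : ℝ≥0) {p q : ℝ≥0} (hp : p ≠ 0) (hq : q ≠ 0) :
    (a * c + b * d) ^ (k + 1)
      ≤ (a * (c ^ (k + 1) / p ^ k) + b * (d ^ (k + 1) / q ^ k)) * (a * p + b * q) ^ k := by
  rcases eq_or_ne (a * p + b * q) 0 with h0 | h0
  · obtain ⟨rfl, rfl⟩ : a = 0 ∧ b = 0 := by simpa [hp, hq] using h0
    simp
  set z := a * p + b * q with hz
  have h := NNReal.pow_arith_mean_le_arith_mean_pow Finset.univ ![a * p / z, b * q / z]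
    ![c / p, d / q] (by simp [← add_div, ← hz, h0]) (k + 1)
  simp only [Fin.sum_univ_two, Matrix.cons_val_zero, Matrix.cons_val_one] at h
  have hmean : a * p / z * (c / p) + b * q / z * (d / q) = (a * c + b * d) / z := by field_simp
  rw [hmean, div_pow, div_le_iff₀ (by positivity)] at h
  refine h.trans_eq ?_
  simp only [div_pow]
  field_simp
  ring

lemma exists_mul_pow_succ_eq_one (k : ℕ) {r : ℝ≥0∞} (h0 : r ≠ 0) (htop : r ≠ ∞) :
    ∃ c : ℝ≥0, 0 < c ∧ r * c ^ (k + 1) = 1 := by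
  lift r to ℝ≥0 using htop
  have hr : r ≠ 0 := by simpa using h0
  obtain ⟨c, hc⟩ : ∃ c : ℝ≥0, c ^ (k + 1) = r⁻¹ := ⟨_, NNReal.rpow_inv_natCast_pow r⁻¹ (by simp)⟩
  refine ⟨c, pos_of_ne_zero fun h ↦ ?_, ?_⟩
  · simp [h, eq_comm, hr] at hc
  · rw [← ENNReal.coe_pow, hc]
    exact_mod_cast mul_inv_cancel₀ hr

/- With `c`, `d` chosen so that `F₀ * c ^ (k + 1)` and `F₁ * d ^ (k + 1)` have the same supremum,
the hypothesis becomes that of the functional Brunn–Minkowski inequality. -/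
lemma min_lintegral_mul_pow_le_of_iSup_ne_top {k : ℕ} {F₀ F₁ G : ℝ → ℝ≥0∞} (hF₀ : Measurable F₀)
    (hF₁ : Measurable F₁) (hG : Measurable G) (htop₀ : ⨆ s, F₀ s ≠ ∞) (htop₁ : ⨆ t, F₁ t ≠ ∞)
    {a b : ℝ≥0} (ha : 0 < a)
    (hFG : ∀ (s t : ℝ) (c d : ℝ≥0), 0 < c → 0 < d →
      min (F₀ s * c ^ (k + 1)) (F₁ t * d ^ (k + 1)) ≤ G (a • s + b • t) * (a * c + b * d) ^ (k + 1))
    {p q : ℝ≥0} (hp : p ≠ 0) (hq : q ≠ 0) :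
    min ((∫⁻ s, F₀ s) * p ^ k) ((∫⁻ t, F₁ t) * q ^ k) ≤ (∫⁻ s, G s) * (a * p + b * q) ^ k := by
  rcases eq_or_ne (⨆ s, F₀ s) 0 with h₀ | h₀
  · simp [ENNReal.iSup_eq_zero.1 h₀]
  rcases eq_or_ne (⨆ t, F₁ t) 0 with h₁ | h₁
  · simp [ENNReal.iSup_eq_zero.1 h₁]
  obtain ⟨c, hc, hc₀⟩ := exists_mul_pow_succ_eq_one k h₀ htop₀
  obtain ⟨d, hd, hd₁⟩ := exists_mul_pow_succ_eq_one k h₁ htop₁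
  set m := min ((∫⁻ s, F₀ s) * p ^ k) ((∫⁻ t, F₁ t) * q ^ k)
  have hbm := mul_lintegral_add_mul_lintegral_le (hF₀.mul_const (c ^ (k + 1)))
    (hF₁.mul_const (d ^ (k + 1))) (hG.mul_const ((a * c + b * d) ^ (k + 1)))
    (by rw [← ENNReal.iSup_mul, ← ENNReal.iSup_mul, hc₀, hd₁]) a b
    fun s t ↦ hFG s t c d hc hd
  rw [lintegral_mul_const _ hF₀, lintegral_mul_const _ hF₁, lintegral_mul_const _ hG] at hbm
  have hradon : ((a * c + b * d) ^ (k + 1) : ℝ≥0∞) ≤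
      (a * (c ^ (k + 1) / p ^ k) + b * (d ^ (k + 1) / q ^ k)) * (a * p + b * q) ^ k := by
    have := ENNReal.coe_le_coe.2 (add_pow_succ_le_mul_add_pow k a b c d hp hq)
    simpa [ENNReal.coe_div, hp, hq] using this
  have hcancel {r : ℝ≥0} (hr : r ≠ 0) {C I : ℝ≥0∞} (h : m ≤ I * r ^ k) : m * (C / r ^ k) ≤ I * C :=
    calc m * (C / r ^ k) ≤ I * r ^ k * (C / r ^ k) := by gcongr
      _ = I * C := by rw [mul_assoc, ENNReal.mul_div_cancel (by simp [hr]) (by finiteness)]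
  have hZ : ((a * c + b * d) ^ (k + 1) : ℝ≥0∞) ≠ 0 := by positivity
  have hZtop : ((a * c + b * d) ^ (k + 1) : ℝ≥0∞) ≠ ∞ := by finiteness
  rw [← ENNReal.mul_le_mul_iff_left hZ hZtop]
  calc m * (a * c + b * d) ^ (k + 1)
      ≤ m * ((a * (c ^ (k + 1) / p ^ k) + b * (d ^ (k + 1) / q ^ k)) * (a * p + b * q) ^ k) := by
        gcongr
    _ = (a * (m * (c ^ (k + 1) / p ^ k)) + b * (m * (d ^ (k + 1) / q ^ k)))
        * (a * p + b * q) ^ k := by ring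
    _ ≤ (a * ((∫⁻ s, F₀ s) * c ^ (k + 1)) + b * ((∫⁻ t, F₁ t) * d ^ (k + 1)))
        * (a * p + b * q) ^ k := by
        gcongr (a * ?_ + b * ?_) * _
        · exact hcancel hp (min_le_left _ _)
        · exact hcancel hq (min_le_right _ _)
    _ ≤ ((∫⁻ s, G s) * (a * c + b * d) ^ (k + 1)) * (a * p + b * q) ^ k := by gcongr
    _ = (∫⁻ s, G s) * (a * p + b * q) ^ k * (a * c + b * d) ^ (k + 1) := by ring

lemma lintegral_eq_iSup_lintegral_min_natCast {α : Type*} [MeasurableSpace α] {μ : Measure α}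
    {F : α → ℝ≥0∞} (hF : Measurable F) : ∫⁻ s, F s ∂μ = ⨆ M : ℕ, ∫⁻ s, min (F s) M ∂μ := by
  rw [← lintegral_iSup (fun M ↦ hF.min measurable_const)
    fun M N hMN s ↦ min_le_min_left _ (Nat.cast_le.2 hMN)]
  refine lintegral_congr fun s ↦ ?_
  rw [← inf_iSup_eq, ENNReal.iSup_natCast, inf_top_eq]

theorem min_lintegral_mul_pow_le {k : ℕ} {F₀ F₁ G : ℝ → ℝ≥0∞} (hF₀ : Measurable F₀)
    (hF₁ : Measurable F₁) (hG : Measurable G) {a b : ℝ≥0} (ha : 0 < a)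
    (hFG : ∀ (s t : ℝ) (c d : ℝ≥0), 0 < c → 0 < d →
      min (F₀ s * c ^ (k + 1)) (F₁ t * d ^ (k + 1)) ≤ G (a • s + b • t) * (a * c + b * d) ^ (k + 1))
    {p q : ℝ≥0} (hp : p ≠ 0) (hq : q ≠ 0) :
    min ((∫⁻ s, F₀ s) * p ^ k) ((∫⁻ t, F₁ t) * q ^ k) ≤ (∫⁻ s, G s) * (a * p + b * q) ^ k := by
  have hmono (F : ℝ → ℝ≥0∞) (r : ℝ≥0∞) : Monotone fun M : ℕ ↦ (∫⁻ s, min (F s) M) * r :=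
    fun M N hMN ↦ by dsimp only; gcongr
  have hbdd (F : ℝ → ℝ≥0∞) (M : ℕ) : ⨆ s, min (F s) M ≠ ∞ :=
    ne_top_of_le_ne_top (ENNReal.natCast_ne_top M) (iSup_le fun _ ↦ min_le_right _ _)
  rw [lintegral_eq_iSup_lintegral_min_natCast hF₀, lintegral_eq_iSup_lintegral_min_natCast hF₁,
    ENNReal.iSup_mul, ENNReal.iSup_mul, ← iSup_inf_of_monotone (hmono F₀ _) (hmono F₁ _)]
  refine iSup_le fun M ↦ ?_
  refine min_lintegral_mul_pow_le_of_iSup_ne_top (hF₀.min measurable_const)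
    (hF₁.min measurable_const) hG (hbdd F₀ M) (hbdd F₁ M) ha (fun s t c d hc hd ↦ ?_) hp hq
  refine le_trans ?_ (hFG s t c d hc hd)
  gcongr <;> exact min_le_left _ _

end BrunnMinkowski

section AffinePowQuasiconcave

open scoped ENNReal NNReal

variable {E F : Type*} [AddCommGroup E] [Module ℝ E] [AddCommGroup F] [Module ℝ F] {k : ℕ}

/-- `f * ℓ ^ k` is quasi-concave along every segment, for every positive affine function `ℓ` on it;
here `p` and `q` are the values of `ℓ` at the endpoints. For `k ≠ 0` this says that `f` is
`(-1 / k)`-concave in the sense of Borell, that is, that `f ^ (-1 / k)` is convex, and for `k = 0`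
that `f` is quasi-concave. Integrating out one dimension lowers `k` by one. -/
def AffinePowQuasiconcave (k : ℕ) (f : E → ℝ≥0∞) : Prop :=
  ∀ ⦃x y : E⦄ ⦃a b p q : ℝ≥0⦄, 0 < a → 0 < b → a + b = 1 → 0 < p → 0 < q →
    min (f x * p ^ k) (f y * q ^ k) ≤ f (a • x + b • y) * (a * p + b * q) ^ k

lemma measurePreserving_consEquivL (m : ℕ) :
    MeasurePreserving (Fin.consEquivL ℝ fun _ : Fin (m + 1) ↦ ℝ) := by
  convert (volume_preserving_piFinSuccAbove (fun _ : Fin (m + 1) ↦ ℝ) 0).symm using 1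
  ext z i
  simp [Fin.insertNthEquiv]

namespace AffinePowQuasiconcave

lemma quasiconcaveOn {f : E → ℝ≥0∞} (hf : AffinePowQuasiconcave k f) :
    QuasiconcaveOn ℝ univ f := by
  intro r
  rw [convex_iff_forall_pos]
  rintro x ⟨-, hx⟩ y ⟨-, hy⟩ a b ha hb hab
  lift a to ℝ≥0 using ha.le
  lift b to ℝ≥0 using hb.le
  norm_cast at ha hb hab
  have hsum : (a + b : ℝ≥0∞) = 1 := by exact_mod_cast hab
  refine ⟨mem_univ _, (le_min hx hy).trans ?_⟩
  simpa [hsum] using! hf (x := x) (y := y) ha hb hab one_pos one_pos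

lemma comp_affineMap {f : E → ℝ≥0∞} (hf : AffinePowQuasiconcave k f) (g : F →ᵃ[ℝ] E) :
    AffinePowQuasiconcave k (f ∘ g) := by
  intro x y a b p q ha hb hab hp hq
  have hcombo : g (a • x + b • y) = a • g x + b • g y :=
    Convex.combo_affine_apply (a := (a : ℝ)) (b := b) (mod_cast hab)
  simpa only [Function.comp_apply, hcombo] using hf ha hb hab hp hq

lemma indicator {f : E → ℝ≥0∞} (hf : AffinePowQuasiconcave k f) {K : Set E} (hK : Convex ℝ K) :
    AffinePowQuasiconcave k (K.indicator f) := by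
  intro x y a b p q ha hb hab hp hq
  by_cases hx : x ∈ K
  · by_cases hy : y ∈ K
    · have hxy : a • x + b • y ∈ K := hK hx hy a.2 b.2 (mod_cast hab)
      simpa only [indicator_of_mem, hx, hy, hxy] using hf ha hb hab hp hq
    · simp [hy]
  · simp [hx]

theorem lintegral_real {f : E × ℝ → ℝ≥0∞} (hf : AffinePowQuasiconcave (k + 1) f) :
    AffinePowQuasiconcave k fun x ↦ ∫⁻ t : ℝ, f (x, t) := by
  intro x y a b p q ha hb hab hp hq
  have hmeas (z : E) : Measurable fun t : ℝ ↦ f (z, t) :=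
    measurable_of_quasiconcaveOn
      (hf.comp_affineMap ((AffineMap.const ℝ ℝ z).prod (AffineMap.id ℝ ℝ))).quasiconcaveOn
  exact min_lintegral_mul_pow_le (hmeas x) (hmeas y) (hmeas _) ha
    (fun s t c d hc hd ↦ hf (x := (x, s)) (y := (y, t)) ha hb hab hc hd) hp.ne' hq.ne'

theorem lintegral_pi {m : ℕ} {f : E × (Fin m → ℝ) → ℝ≥0∞} (hf : AffinePowQuasiconcave (k + m) f) :
    AffinePowQuasiconcave k fun x ↦ ∫⁻ y : Fin m → ℝ, f (x, y) := by
  induction m generalizing k with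
  | zero =>
    simp only [Measure.volume_pi_eq_dirac (0 : Fin 0 → ℝ), lintegral_dirac]
    exact hf.comp_affineMap ((AffineMap.id ℝ E).prod (AffineMap.const ℝ E 0))
  | succ m ih =>
    let cons := Fin.consEquivL ℝ fun _ : Fin (m + 1) ↦ ℝ
    let assoc : (E × (Fin m → ℝ)) × ℝ →ₗ[ℝ] E × (Fin (m + 1) → ℝ) :=
      (.fst ℝ E _ ∘ₗ .fst ℝ _ ℝ).prod
        (cons.toLinearMap ∘ₗ (.prod (.snd ℝ _ ℝ) (.snd ℝ E _ ∘ₗ .fst ℝ _ ℝ)))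
    have hmarginal :
        AffinePowQuasiconcave k fun x ↦ ∫⁻ y : Fin m → ℝ, ∫⁻ t : ℝ, f (x, cons (t, y)) :=
      ih (lintegral_real (hf.comp_affineMap assoc.toAffineMap))
    convert hmarginal with x
    let fiber := (AffineMap.const ℝ (ℝ × (Fin m → ℝ)) x).prod cons.toLinearMap.toAffineMap
    have hfiber : AEMeasurable (fun z ↦ f (x, cons z)) (volume.prod volume) :=
      aemeasurable_of_quasiconcaveOn _ (hf.comp_affineMap fiber).quasiconcaveOn
    rw [← lintegral_prod_symm _ hfiber, ← Measure.volume_eq_prod]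
    exact ((measurePreserving_consEquivL m).lintegral_comp_emb
      cons.toHomeomorph.measurableEmbedding fun y ↦ f (x, y)).symm

end AffinePowQuasiconcave

lemma affinePowQuasiconcave_ofReal_of_unimodal {f : E → ℝ} (hf : ∀ x, 0 ≤ f x)
    (huni : ∀ x y : E, ∀ c d : ℝ, (∀ t ∈ Icc (0 : ℝ) 1, 0 ≤ c + d * t) →
      ∃ tmax ∈ Icc (0 : ℝ) 1,
        MonotoneOn (fun t ↦ f ((1 - t) • x + t • y) * (c + d * t) ^ k) (Icc 0 tmax) ∧
        AntitoneOn (fun t ↦ f ((1 - t) • x + t • y) * (c + d * t) ^ k) (Icc tmax 1)) :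
    AffinePowQuasiconcave k fun x ↦ ENNReal.ofReal (f x) := by
  intro x y a b p q _ _ hab _ _
  have ha_eq : (a : ℝ) = 1 - b := eq_sub_of_add_eq (mod_cast hab)
  have hb_mem : (b : ℝ) ∈ Icc 0 1 := ⟨b.2, mod_cast hab ▸ le_add_self⟩
  obtain ⟨tmax, htmax, hmono, hanti⟩ := huni x y p (q - p) fun t ht ↦ by
    nlinarith [mul_nonneg p.coe_nonneg (sub_nonneg.2 ht.2), mul_nonneg q.coe_nonneg ht.1]
  have hmin : min (f x * p ^ k) (f y * q ^ k)
      ≤ f ((1 - b : ℝ) • x + (b : ℝ) • y) * (p + (q - p) * b) ^ k := by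
    rcases le_total (b : ℝ) tmax with hbt | htb
    · refine (min_le_left _ _).trans ?_
      simpa using hmono ⟨le_rfl, htmax.1⟩ ⟨hb_mem.1, hbt⟩ hb_mem.1
    · refine (min_le_right _ _).trans ?_
      simpa using hanti ⟨htb, hb_mem.2⟩ ⟨htmax.2, le_rfl⟩ hb_mem.2
  have hmean : (a * p + b * q : ℝ≥0) = (p + (q - p) * b : ℝ) := by push_cast; rw [ha_eq]; ring
  rw [← ha_eq, ← hmean] at hmin
  simpa only [ENNReal.ofReal_min, ENNReal.ofReal_mul (hf _), ENNReal.ofReal_coe_nnreal,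
    ENNReal.ofReal_pow (NNReal.coe_nonneg _), ENNReal.coe_add, ENNReal.coe_mul]
    using! ENNReal.ofReal_le_ofReal hmin

end AffinePowQuasiconcave

section Projection

open scoped ENNReal NNReal RealInnerProductSpace

variable {E : Type*} [NormedAddCommGroup E] [InnerProductSpace ℝ E] [FiniteDimensional ℝ E]
  [MeasurableSpace E] [BorelSpace E] {m : ℕ}

lemma exists_measurePreserving_inner_eq_fst (hE : Module.finrank ℝ E = m + 1) {e : E}
    (he : ‖e‖ = 1) :
    ∃ Ψ : (ℝ × (Fin m → ℝ)) ≃L[ℝ] E, MeasurePreserving Ψ ∧ ∀ z, ⟪e, Ψ z⟫ = z.1 := by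
  have horth : Orthonormal ℝ (({0} : Set (Fin (m + 1))).domRestrict fun _ ↦ e) :=
    ⟨fun _ ↦ he, fun i j hij ↦ (hij (Subsingleton.elim i j)).elim⟩
  obtain ⟨b, hb⟩ := horth.exists_orthonormalBasis_extension_of_card_eq (by simpa using hE)
  let Ψ := (Fin.consEquivL ℝ fun _ : Fin (m + 1) ↦ ℝ).trans
    ((PiLp.continuousLinearEquiv 2 ℝ _).symm.trans b.repr.symm.toContinuousLinearEquiv)
  refine ⟨Ψ, ?_, fun z ↦ ?_⟩
  · exact b.measurePreserving_repr_symm.comp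
      ((PiLp.volume_preserving_toLp _).comp (measurePreserving_consEquivL m))
  · rw [← hb 0 rfl, ← b.repr_apply_apply]
    simp [Ψ]

lemma exists_quasiconcaveOn_marginal (hE : Module.finrank ℝ E = m + 1) {e : E} (he : ‖e‖ = 1)
    {φ : E → ℝ≥0∞} (hφ : AffinePowQuasiconcave m φ) :
    ∃ F : ℝ → ℝ≥0∞, QuasiconcaveOn ℝ univ F ∧
      (∀ T, ∫⁻ t in T, F t = ∫⁻ x in (⟪e, ·⟫) ⁻¹' T, φ x) ∧
      Function.support F ⊆ (⟪e, ·⟫) '' Function.support φ := by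
  obtain ⟨Ψ, hΨ, hfst⟩ := exists_measurePreserving_inner_eq_fst hE he
  have hφΨ : AffinePowQuasiconcave (0 + m) (φ ∘ Ψ) := by
    simpa using! hφ.comp_affineMap Ψ.toLinearMap.toAffineMap
  have hmeas : AEMeasurable (fun z ↦ φ (Ψ z)) (volume.prod volume) :=
    aemeasurable_of_quasiconcaveOn _ hφΨ.quasiconcaveOn
  refine ⟨fun t ↦ ∫⁻ y, φ (Ψ (t, y)), hφΨ.lintegral_pi.quasiconcaveOn, fun T ↦ ?_,
    fun t ht ↦ ?_⟩
  · have hpre : Ψ ⁻¹' ((⟪e, ·⟫) ⁻¹' T) = T ×ˢ univ := by ext z; simp [hfst]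
    rw [← hΨ.setLIntegral_comp_preimage_emb Ψ.toHomeomorph.measurableEmbedding, hpre,
      Measure.volume_eq_prod, setLIntegral_prod _ hmeas.restrict, Measure.restrict_univ]
  · obtain ⟨y, hy⟩ : ∃ y, φ (Ψ (t, y)) ≠ 0 := by
      by_contra! hzero
      exact ht (by simp [hzero])
    exact ⟨Ψ (t, y), hy, hfst _⟩

lemma setLIntegral_le_of_inter_support_subset {α : Type*} [MeasurableSpace α] {μ : Measure α}
    {φ : α → ℝ≥0∞} {A B : Set α} (hA : MeasurableSet A) (hB : MeasurableSet B)
    (h : A ∩ Function.support φ ⊆ B) : ∫⁻ x in A, φ x ∂μ ≤ ∫⁻ x in B, φ x ∂μ := by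
  rw [← lintegral_indicator hA, ← lintegral_indicator hB]
  refine lintegral_mono (indicator_le fun x hx ↦ ?_)
  by_cases hφ : φ x = 0
  · simp [hφ]
  · rw [indicator_of_mem (h ⟨hx, hφ⟩)]

theorem mul_min_setLIntegral_le_of_inner_separated (hE : Module.finrank ℝ E = m + 1) {e : E}
    (he : ‖e‖ = 1) {φ : E → ℝ≥0∞} (hφ : AffinePowQuasiconcave m φ) {S₁ S₂ : Set E}
    (hS₁ : MeasurableSet S₁) (hS₂ : MeasurableSet S₂) {δ D : ℝ≥0∞}
    (hsep : ∀ x ∈ S₁ ∩ Function.support φ, ∀ y ∈ S₂ ∩ Function.support φ, δ ≤ edist ⟪e, x⟫ ⟪e, y⟫)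
    (hD : ∀ x ∈ Function.support φ, ∀ y ∈ Function.support φ, edist ⟪e, x⟫ ⟪e, y⟫ ≤ D) :
    δ * min (∫⁻ x in S₁, φ x) (∫⁻ x in S₂, φ x) ≤ D * ∫⁻ x in (S₁ ∪ S₂)ᶜ, φ x := by
  obtain ⟨F, hF, hmarginal, hsupp⟩ := exists_quasiconcaveOn_marginal hE he hφ
  let T (S : Set E) : Set ℝ := closure ((⟪e, ·⟫) '' (S ∩ Function.support φ))
  have hT (S : Set E) : MeasurableSet (T S) := isClosed_closure.measurableSet
  have hpre {A : Set ℝ} (hA : MeasurableSet A) : MeasurableSet ((⟪e, ·⟫) ⁻¹' A) :=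
    (measurable_const.inner measurable_id) hA
  have hST (S : Set E) : S ∩ Function.support φ ⊆ (⟪e, ·⟫) ⁻¹' T S :=
    fun x hx ↦ subset_closure (mem_image_of_mem _ hx)
  have hle {S : Set E} (hS : MeasurableSet S) : ∫⁻ x in S, φ x ≤ ∫⁻ t in T S, F t := by
    rw [hmarginal]
    exact setLIntegral_le_of_inter_support_subset hS (hpre (hT S)) (hST S)
  have hge : ∫⁻ t in (T S₁ ∪ T S₂)ᶜ, F t ≤ ∫⁻ x in (S₁ ∪ S₂)ᶜ, φ x := by
    have hTc := ((hT S₁).union (hT S₂)).compl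
    rw [hmarginal]
    refine setLIntegral_le_of_inter_support_subset (hpre hTc) (hS₁.union hS₂).compl ?_
    rintro x ⟨hxT, hx⟩ hxS
    exact hxT (hxS.imp (fun h ↦ hST S₁ ⟨h, hx⟩) fun h ↦ hST S₂ ⟨h, hx⟩)
  have hTsep : ∀ s ∈ T S₁, ∀ t ∈ T S₂, δ ≤ edist s t := fun s hs t ht ↦ by
    have := map_mem_closure₂ (u := Ici δ) continuous_edist hs ht (by
      rintro _ ⟨x, hx, rfl⟩ _ ⟨y, hy, rfl⟩
      exact hsep x hx y hy)
    rwa [isClosed_Ici.closure_eq] at this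
  have hvol : volume (Function.support F) ≤ D := by
    refine (Real.volume_le_diam _).trans (Metric.ediam_le ?_)
    intro s hs t ht
    obtain ⟨x, hx, rfl⟩ := hsupp hs
    obtain ⟨y, hy, rfl⟩ := hsupp ht
    exact hD x hx y hy
  calc δ * min (∫⁻ x in S₁, φ x) (∫⁻ x in S₂, φ x)
      ≤ δ * min (∫⁻ t in T S₁, F t) (∫⁻ t in T S₂, F t) := by gcongr <;> exact hle ‹_›
    _ ≤ volume (Function.support F) * ∫⁻ t in (T S₁ ∪ T S₂)ᶜ, F t :=
        mul_min_setLIntegral_le_of_quasiconcaveOn hF isClosed_closure isClosed_closure hTsep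
    _ ≤ D * ∫⁻ x in (S₁ ∪ S₂)ᶜ, φ x := by gcongr

end Projection

section Bisection

variable {α X : Type*} [MeasurableSpace α] {μ : Measure α} {g h : α → ℝ}

lemma continuous_setIntegral_setOf_nonneg [TopologicalSpace X] [FirstCountableTopology X]
    (hg : Integrable g μ) {l : X → α → ℝ} (hmeas : ∀ θ, Measurable (l θ))
    (hcont : ∀ x, Continuous fun θ ↦ l θ x) (hne : ∀ θ, ∀ᵐ x ∂μ, l θ x ≠ 0) :
    Continuous fun θ ↦ ∫ x in {x | 0 ≤ l θ x}, g x ∂μ := by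
  have hset (θ : X) : MeasurableSet {x | 0 ≤ l θ x} := measurableSet_le measurable_const (hmeas θ)
  simp only [← integral_indicator (hset _)]
  refine continuous_iff_continuousAt.2 fun θ ↦ continuousAt_of_dominated (bound := fun x ↦ ‖g x‖)
    (.of_forall fun θ' ↦ (hg.indicator (hset θ')).aestronglyMeasurable)
    (.of_forall fun θ' ↦ ae_of_all _ fun x ↦ norm_indicator_le_norm_self _ _) hg.norm ?_
  filter_upwards [hne θ] with x hx
  have hev : ∀ᶠ θ' in nhds θ, (0 ≤ l θ x ↔ 0 ≤ l θ' x) := by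
    rcases hx.lt_or_gt with hneg | hpos
    · filter_upwards [(hcont x).continuousAt.eventually_lt_const hneg] with θ' hθ'
      exact iff_of_false hneg.not_ge hθ'.not_ge
    · filter_upwards [(hcont x).continuousAt.eventually_const_lt hpos] with θ' hθ'
      exact iff_of_true hpos.le hθ'.le
  refine continuousAt_const.congr (f := fun _ ↦ {x | 0 ≤ l θ x}.indicator g x) ?_
  filter_upwards [hev] with θ' hθ'
  simp only [indicator_apply, mem_ofPred_eq, hθ']

lemma setIntegral_nonneg_add_setIntegral_nonneg_neg (hg : Integrable g μ) {l : α → ℝ}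
    (hmeas : Measurable l) (hne : ∀ᵐ x ∂μ, l x ≠ 0) :
    (∫ x in {x | 0 ≤ l x}, g x ∂μ) + ∫ x in {x | 0 ≤ -l x}, g x ∂μ = ∫ x, g x ∂μ := by
  have hcompl : {x | 0 ≤ -l x} =ᵐ[μ] {x | 0 ≤ l x}ᶜ := by
    filter_upwards [hne] with x hx
    simp only [eq_iff_iff]
    change 0 ≤ -l x ↔ ¬ 0 ≤ l x
    rw [neg_nonneg, not_le, le_iff_lt_or_eq, or_iff_left hx]
  rw [setIntegral_congr_set hcompl]
  exact integral_add_compl (measurableSet_le measurable_const hmeas) hg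

/- Halve the integral of `g`; one of the two halves carries positive mass of `h`. -/
lemma exists_setIntegral_setOf_nonneg_pos [TopologicalSpace X] [FirstCountableTopology X]
    [PreconnectedSpace X] [Nonempty X] (hg : Integrable g μ) (hh : Integrable h μ)
    (hg_pos : 0 < ∫ x, g x ∂μ) (hh_pos : 0 < ∫ x, h x ∂μ) {l : X → α → ℝ}
    (hmeas : ∀ θ, Measurable (l θ)) (hcont : ∀ x, Continuous fun θ ↦ l θ x)
    (hne : ∀ θ, ∀ᵐ x ∂μ, l θ x ≠ 0) (hanti : ∀ θ, ∃ θ', ∀ x, l θ' x = -l θ x) :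
    ∃ θ, 0 < ∫ x in {x | 0 ≤ l θ x}, g x ∂μ ∧ 0 < ∫ x in {x | 0 ≤ l θ x}, h x ∂μ := by
  choose σ hσ using hanti
  have hsum {k : α → ℝ} (hk : Integrable k μ) (θ : X) :
      (∫ x in {x | 0 ≤ l θ x}, k x ∂μ) + ∫ x in {x | 0 ≤ l (σ θ) x}, k x ∂μ = ∫ x, k x ∂μ := by
    simp only [hσ]
    exact setIntegral_nonneg_add_setIntegral_nonneg_neg hk (hmeas θ) (hne θ)
  obtain ⟨θ, hθ⟩ : ∃ θ, ∫ x in {x | 0 ≤ l θ x}, g x ∂μ = (∫ x, g x ∂μ) / 2 := by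
    have hcontg := continuous_setIntegral_setOf_nonneg hg hmeas hcont hne
    obtain ⟨θ₀⟩ := ‹Nonempty X›
    have hsum₀ := hsum hg θ₀
    rcases le_total (∫ x in {x | 0 ≤ l θ₀ x}, g x ∂μ) ((∫ x, g x ∂μ) / 2) with hle | hle
    · exact mem_range_of_exists_le_of_exists_ge hcontg ⟨θ₀, hle⟩ ⟨σ θ₀, by linarith⟩
    · exact mem_range_of_exists_le_of_exists_ge hcontg ⟨σ θ₀, by linarith⟩ ⟨θ₀, hle⟩
  have hsumg := hsum hg θ
  have hsumh := hsum hh θ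
  rcases lt_or_ge 0 (∫ x in {x | 0 ≤ l θ x}, h x ∂μ) with hpos | hnonpos
  · exact ⟨θ, by linarith, hpos⟩
  · exact ⟨σ θ, by linarith, by linarith⟩

variable {E W : Type*} [NormedAddCommGroup E] [NormedSpace ℝ E] [FiniteDimensional ℝ E]
  [NormedAddCommGroup W] [NormedSpace ℝ W] [FiniteDimensional ℝ W]

lemma preconnectedSpace_strongDual_ne_zero (hW : 1 < Module.finrank ℝ W) :
    PreconnectedSpace {φ : StrongDual ℝ W // φ ≠ 0} := by
  have hrank : Module.finrank ℝ (StrongDual ℝ W) = Module.finrank ℝ W :=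
    LinearMap.toContinuousLinearMap.finrank_eq.symm.trans Subspace.dual_finrank_eq
  have hlt : 1 < Module.rank ℝ (StrongDual ℝ W) := by
    rw [← Module.finrank_eq_rank, hrank]
    exact_mod_cast hW
  exact isPreconnected_iff_preconnectedSpace.1
    (isPathConnected_compl_singleton_of_one_lt_rank hlt 0).isConnected.isPreconnected

theorem exists_halfSpace_setIntegral_pos [MeasurableSpace E] [BorelSpace E] {ν : Measure E}
    [ν.IsAddHaarMeasure] {g h : E → ℝ} (hg : Integrable g ν) (hh : Integrable h ν) {K : Set E}
    (hg_pos : 0 < ∫ x in K, g x ∂ν) (hh_pos : 0 < ∫ x in K, h x ∂ν)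
    (hW : 1 < Module.finrank ℝ W) {P : E →L[ℝ] W} (hP : Function.Surjective P) (p : W) :
    ∃ φ : StrongDual ℝ W, φ ≠ 0 ∧ 0 < ∫ x in K ∩ {x | φ p ≤ φ (P x)}, g x ∂ν ∧
      0 < ∫ x in K ∩ {x | φ p ≤ φ (P x)}, h x ∂ν := by
  have : PreconnectedSpace {φ : StrongDual ℝ W // φ ≠ 0} := preconnectedSpace_strongDual_ne_zero hW
  have : Nontrivial W := Module.nontrivial_of_finrank_pos (zero_lt_one.trans hW)
  have : Nonempty {φ : StrongDual ℝ W // φ ≠ 0} := let ⟨φ, hφ⟩ := exists_ne 0; ⟨φ, hφ⟩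
  let l (φ : {φ : StrongDual ℝ W // φ ≠ 0}) (x : E) : ℝ := φ.1 (P x) - φ.1 p
  have hmeas (φ) : Measurable (l φ) := (φ.1 ∘L P).measurable.sub_const _
  have hcont (x : E) : Continuous fun φ ↦ l φ x := by fun_prop
  have hne (φ) : ∀ᵐ x ∂ν.restrict K, l φ x ≠ 0 := by
    have hsurj : Function.Surjective (φ.1.toLinearMap ∘ₗ P.toLinearMap) :=
      (LinearMap.surjective fun h ↦ φ.2 (ContinuousLinearMap.coe_injective h)).comp hP
    have hae := (ae_comp_linearMap_mem_iff _ ν volume hsurj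
      (measurableSet_singleton (φ.1 p)).compl).2 (Measure.ae_ne volume _)
    filter_upwards [ae_restrict_of_ae hae] with x hx using sub_ne_zero.2 hx
  obtain ⟨φ, hφg, hφh⟩ := exists_setIntegral_setOf_nonneg_pos hg.restrict hh.restrict hg_pos hh_pos
    hmeas hcont hne fun φ ↦ ⟨⟨-φ.1, neg_ne_zero.2 φ.2⟩, fun x ↦ by simp [l, neg_add_eq_sub]⟩
  have hset : MeasurableSet {x | φ.1 p ≤ φ.1 (P x)} :=
    measurableSet_le measurable_const (φ.1 ∘L P).measurable
  simp only [l, sub_nonneg, Measure.restrict_restrict hset, inter_comm _ K] at hφg hφh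
  exact ⟨φ.1, φ.2, hφg, hφh⟩

end Bisection

section Collinear

open scoped RealInnerProductSpace

variable {E W : Type*} [NormedAddCommGroup W] [NormedSpace ℝ W]

lemma interior_eq_empty_of_dense_forall_le_apply {S D : Set W} (hD : Dense D)
    (h : ∀ p ∈ D, ∃ φ : StrongDual ℝ W, φ ≠ 0 ∧ ∀ x ∈ S, φ p ≤ φ x) : interior S = ∅ := by
  by_contra hne
  obtain ⟨p, hpS, hpD⟩ :=
    hD.inter_open_nonempty _ isOpen_interior (nonempty_iff_ne_empty.2 hne)
  obtain ⟨φ, hφ, hmin⟩ := h p hpD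
  have hlocal : IsLocalMin φ p :=
    Filter.mem_of_superset (mem_interior_iff_mem_nhds.1 hpS) hmin
  exact hφ (hlocal.hasFDerivAt_eq_zero φ.hasFDerivAt)

lemma collinear_of_interior_eq_empty (hW : Module.finrank ℝ W = 2) {S : Set W}
    (hS : Convex ℝ S) (hint : interior S = ∅) : Collinear ℝ S := by
  have : FiniteDimensional ℝ W := Module.finite_of_finrank_eq_succ hW
  rcases S.eq_empty_or_nonempty with rfl | hne
  · exact collinear_empty ℝ W
  have hspan : vectorSpan ℝ S ≠ ⊤ := fun htop ↦ by
    rw [← AffineSubspace.affineSpan_eq_top_iff_vectorSpan_eq_top_of_nonempty ℝ W W hne,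
      ← hS.interior_nonempty_iff_affineSpan_eq_top, hint] at htop
    exact not_nonempty_empty htop
  rw [collinear_iff_finrank_le_one]
  have := Submodule.finrank_lt hspan
  omega

lemma collinear_of_forall_collinear_image_coord [AddCommGroup E] [Module ℝ E] {ι : Type*}
    (b : Module.Basis ι ℝ E) {C : Set E}
    (h : ∀ i j, i ≠ j → Collinear ℝ ((fun x ↦ (b.coord i x, b.coord j x)) '' C)) :
    Collinear ℝ C := by
  rcases C.subsingleton_or_nontrivial with hC | ⟨x₀, hx₀, y, hy, hne⟩
  · rcases hC.eq_empty_or_singleton with rfl | ⟨x, rfl⟩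
    exacts [collinear_empty ℝ E, collinear_singleton ℝ x]
  obtain ⟨i, hi⟩ : ∃ i, b.coord i (y - x₀) ≠ 0 := by
    by_contra! hzero
    exact hne (sub_eq_zero.1 (b.forall_coord_eq_zero_iff.1 hzero)).symm
  rw [collinear_iff_of_mem hx₀]
  refine ⟨y - x₀, fun x hx ↦ ⟨b.coord i (x - x₀) / b.coord i (y - x₀), ?_⟩⟩
  rw [vadd_eq_add, ← sub_eq_iff_eq_add]
  refine b.ext_elem fun j ↦ ?_
  rcases eq_or_ne i j with rfl | hij
  · simpa using (div_mul_cancel₀ _ hi).symm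
  obtain ⟨w, hw⟩ := (collinear_iff_of_mem (mem_image_of_mem _ hx₀)).1 (h i j hij)
  obtain ⟨s, hs⟩ := hw _ (mem_image_of_mem _ hx)
  obtain ⟨t, ht⟩ := hw _ (mem_image_of_mem _ hy)
  simp only [vadd_eq_add, ← sub_eq_iff_eq_add, Prod.mk_sub_mk, ← map_sub, Prod.ext_iff,
    Prod.smul_fst, Prod.smul_snd, smul_eq_mul] at hs ht
  change b.coord j _ = b.coord j _
  rw [map_smul, smul_eq_mul, hs.1, hs.2, ht.2, ht.1]
  rw [ht.1] at hi
  field_simp [left_ne_zero_of_mul hi, right_ne_zero_of_mul hi]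

lemma exists_norm_eq_one_dist_eq_of_collinear [NormedAddCommGroup E] [InnerProductSpace ℝ E]
    [Nontrivial E] {C : Set E} (hC : Collinear ℝ C) :
    ∃ e : E, ‖e‖ = 1 ∧ ∀ x ∈ C, ∀ y ∈ C, dist x y = |⟪e, x⟫ - ⟪e, y⟫| := by
  obtain ⟨p₀, v, hv⟩ := (collinear_iff_exists_forall_eq_smul_vadd C).1 hC
  obtain ⟨e, he, hdir⟩ : ∃ e : E, ‖e‖ = 1 ∧ ∃ c : ℝ, v = c • e := by
    rcases eq_or_ne v 0 with rfl | hv0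
    · obtain ⟨e, he⟩ := exists_norm_eq E zero_le_one
      exact ⟨e, he, 0, (zero_smul ℝ e).symm⟩
    · exact ⟨‖v‖⁻¹ • v, norm_smul_inv_norm hv0, ‖v‖,
        (smul_inv_smul₀ (norm_ne_zero_iff.2 hv0) v).symm⟩
  obtain ⟨c, rfl⟩ := hdir
  refine ⟨e, he, fun x hx y hy ↦ ?_⟩
  obtain ⟨r, rfl⟩ := hv x hx
  obtain ⟨s, rfl⟩ := hv y hy
  have hself : ⟪e, e⟫ = 1 := by simp [he]
  calc dist (r • c • e +ᵥ p₀) (s • c • e +ᵥ p₀) = ‖(r * c - s * c) • e‖ := by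
        rw [dist_vadd_cancel_right, dist_eq_norm, smul_smul, smul_smul, sub_smul]
    _ = |r * c - s * c| := by rw [norm_smul, he, mul_one, Real.norm_eq_abs]
    _ = |⟪e, r • c • e +ᵥ p₀⟫ - ⟪e, s • c • e +ᵥ p₀⟫| := by
        simp only [vadd_eq_add, inner_add_right, inner_smul_right, hself, mul_one,
          add_sub_add_right_eq_sub]

end Collinear

section Localization

variable {E W : Type*} [NormedAddCommGroup W] [NormedSpace ℝ W]
  [NormedAddCommGroup E] [NormedSpace ℝ E] [FiniteDimensional ℝ E] [MeasurableSpace E]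
  [BorelSpace E] {μ : Measure E} [μ.IsAddHaarMeasure] {g h : E → ℝ}

lemma exists_antitone_forall_le_apply [FiniteDimensional ℝ W] (hg : Integrable g μ)
    (hh : Integrable h μ) {K₀ : Set E}
    (hK₀ : IsCompact K₀) (hconv : Convex ℝ K₀) (hg_pos : 0 < ∫ x in K₀, g x ∂μ)
    (hh_pos : 0 < ∫ x in K₀, h x ∂μ) {ι : Type*} [Countable ι] {P : ι → E →L[ℝ] W}
    (hP : ∀ i, Function.Surjective (P i)) (hW : 1 < Module.finrank ℝ W) (p : ι → W) :
    ∃ K : ℕ → Set E, Antitone K ∧ (∀ n, IsCompact (K n) ∧ Convex ℝ (K n) ∧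
        0 < ∫ x in K n, g x ∂μ ∧ 0 < ∫ x in K n, h x ∂μ) ∧
      ∀ i, ∃ φ : StrongDual ℝ W, φ ≠ 0 ∧ ∃ n, ∀ x ∈ K n, φ (p i) ≤ φ (P i x) := by
  have := Encodable.ofCountable ι
  let 𝒦 := {K : Set E // IsCompact K ∧ Convex ℝ K ∧ 0 < ∫ x in K, g x ∂μ ∧ 0 < ∫ x in K, h x ∂μ}
  let 𝒟 (i : ι) : Order.Cofinal 𝒦ᵒᵈ :=
    { carrier := {K | ∃ φ : StrongDual ℝ W, φ ≠ 0 ∧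
        ∀ x ∈ (OrderDual.ofDual K).1, φ (p i) ≤ φ (P i x)}
      isCofinal := by
        rintro ⟨K, hK, hKconv, hKg, hKh⟩
        obtain ⟨φ, hφ, hφg, hφh⟩ := exists_halfSpace_setIntegral_pos hg hh hKg hKh hW (hP i) (p i)
        have hclosed : IsClosed {x | φ (p i) ≤ φ (P i x)} :=
          isClosed_le continuous_const (by fun_prop)
        have hhalf : Convex ℝ {x | φ (p i) ≤ φ (P i x)} :=
          convex_halfSpace_ge (φ ∘L P i).toLinearMap.isLinear _
        exact ⟨OrderDual.toDual ⟨_, hK.inter_right hclosed, hKconv.inter hhalf, hφg, hφh⟩,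
          ⟨φ, hφ, fun x hx ↦ hx.2⟩, inter_subset_left⟩ }
  let K₀' : 𝒦ᵒᵈ := OrderDual.toDual ⟨K₀, hK₀, hconv, hg_pos, hh_pos⟩
  let K := Order.sequenceOfCofinals K₀' 𝒟
  refine ⟨fun n ↦ (OrderDual.ofDual (K n)).1, Order.sequenceOfCofinals.monotone K₀' 𝒟,
    fun n ↦ (OrderDual.ofDual (K n)).2, fun i ↦ ?_⟩
  obtain ⟨φ, hφ, hle⟩ := Order.sequenceOfCofinals.encode_mem K₀' 𝒟 i
  exact ⟨φ, hφ, _, hle⟩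

theorem exists_antitone_collinear_iInter (hg : Integrable g μ) (hh : Integrable h μ) {K₀ : Set E}
    (hK₀ : IsCompact K₀) (hconv : Convex ℝ K₀) (hg_pos : 0 < ∫ x in K₀, g x ∂μ)
    (hh_pos : 0 < ∫ x in K₀, h x ∂μ) :
    ∃ K : ℕ → Set E, Antitone K ∧ (∀ n, IsCompact (K n) ∧ Convex ℝ (K n) ∧
      0 < ∫ x in K n, g x ∂μ ∧ 0 < ∫ x in K n, h x ∂μ) ∧ Collinear ℝ (⋂ n, K n) := by
  let b := Module.finBasis ℝ E
  let P (i j : Fin (Module.finrank ℝ E)) : E →L[ℝ] ℝ × ℝ :=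
    (b.coord i).toContinuousLinearMap.prod (b.coord j).toContinuousLinearMap
  have hP {i j} (hij : i ≠ j) : Function.Surjective (P i j) := fun z ↦
    ⟨z.1 • b i + z.2 • b j, by ext <;> simp [P, hij, hij.symm]⟩
  have hW : Module.finrank ℝ (ℝ × ℝ) = 2 := by simp
  let ι := {ij : Fin (Module.finrank ℝ E) × Fin (Module.finrank ℝ E) // ij.1 ≠ ij.2} × ℕ
  obtain ⟨K, hanti, hK, hhalf⟩ := exists_antitone_forall_le_apply hg hh hK₀ hconv hg_pos hh_pos
    (ι := ι) (P := fun s ↦ P s.1.1.1 s.1.1.2) (fun s ↦ hP s.1.2) (by omega)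
    fun s ↦ TopologicalSpace.denseSeq (ℝ × ℝ) s.2
  refine ⟨K, hanti, hK, collinear_of_forall_collinear_image_coord b fun i j hij ↦ ?_⟩
  have himage : Convex ℝ (P i j '' ⋂ n, K n) :=
    (convex_iInter fun n ↦ (hK n).2.1).linear_image (P i j).toLinearMap
  refine collinear_of_interior_eq_empty hW himage
    (interior_eq_empty_of_dense_forall_le_apply (TopologicalSpace.denseRange_denseSeq _) ?_)
  rintro _ ⟨q, rfl⟩
  obtain ⟨φ, hφ, n, hle⟩ := hhalf ⟨⟨(i, j), hij⟩, q⟩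
  exact ⟨φ, hφ, forall_mem_image.2 fun x hx ↦ hle x (mem_iInter.1 hx n)⟩

end Localization

section Needle

open scoped RealInnerProductSpace

variable {E : Type*} [NormedAddCommGroup E] [InnerProductSpace ℝ E] [FiniteDimensional ℝ E]
  [Nontrivial E] [MeasurableSpace E] [BorelSpace E] {μ : Measure E} [μ.IsAddHaarMeasure]
  {g h : E → ℝ}

theorem exists_needle_setIntegral_pos (hg : Integrable g μ) (hh : Integrable h μ) {K₀ : Set E}
    (hK₀ : IsCompact K₀) (hconv : Convex ℝ K₀) (hg_pos : 0 < ∫ x in K₀, g x ∂μ)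
    (hh_pos : 0 < ∫ x in K₀, h x ∂μ) {ε : ℝ} (hε : 0 < ε) :
    ∃ K : Set E, IsCompact K ∧ Convex ℝ K ∧ 0 < ∫ x in K, g x ∂μ ∧ 0 < ∫ x in K, h x ∂μ ∧
      ∃ e : E, ‖e‖ = 1 ∧ ∀ x ∈ K, ∀ y ∈ K, dist x y < |⟪e, x⟫ - ⟪e, y⟫| + ε := by
  obtain ⟨K, hanti, hK, hcol⟩ := exists_antitone_collinear_iInter hg hh hK₀ hconv hg_pos hh_pos
  obtain ⟨e, he, hdist⟩ := exists_norm_eq_one_dist_eq_of_collinear hcol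
  let U : Set (E × E) := {z | dist z.1 z.2 < |⟪e, z.1⟫ - ⟪e, z.2⟫| + ε}
  have hU : IsOpen U := isOpen_lt (by fun_prop) (by fun_prop)
  have hsub : ⋂ n, K n ×ˢ K n ⊆ U := fun z hz ↦ by
    have hz₁ : z.1 ∈ ⋂ n, K n := mem_iInter.2 fun n ↦ (mem_iInter.1 hz n).1
    have hz₂ : z.2 ∈ ⋂ n, K n := mem_iInter.2 fun n ↦ (mem_iInter.1 hz n).2
    exact (hdist _ hz₁ _ hz₂).trans_lt (lt_add_of_pos_right _ hε)
  have hdir : Directed (· ⊇ ·) fun n ↦ K n ×ˢ K n :=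
    Antitone.directed_ge fun m n hmn ↦ prod_mono (hanti hmn) (hanti hmn)
  obtain ⟨n, hn⟩ := exists_subset_nhds_of_isCompact hdir (fun n ↦ (hK n).1.prod (hK n).1)
    fun z hz ↦ hU.mem_nhds (hsub hz)
  obtain ⟨hcompact, hconvex, hgn, hhn⟩ := hK n
  exact ⟨K n, hcompact, hconvex, hgn, hhn, e, he, fun x hx y hy ↦ hn (mk_mem_prod hx hy)⟩

end Needle

section Isoperimetry

open scoped RealInnerProductSpace

variable {E : Type*} [NormedAddCommGroup E] [InnerProductSpace ℝ E] [FiniteDimensional ℝ E]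
  [MeasurableSpace E] [BorelSpace E] {f : E → ℝ} {S₁ S₂ : Set E} {δ D : ℝ}

theorem exists_needle_lt_mul_min_setIntegral [Nontrivial E] {μ : Measure E} [μ.IsAddHaarMeasure]
    (hint : Integrable f μ) {K₀ : Set E} (hK₀ : IsCompact K₀) (hconv : Convex ℝ K₀)
    (hsupp : Function.support f ⊆ K₀) {S₃ : Set E} (hS₁ : MeasurableSet S₁) (hS₂ : MeasurableSet S₂)
    (hS₃ : MeasurableSet S₃) (hδ : 0 ≤ δ)
    (hlt : D * ∫ x in S₃, f x ∂μ < δ * min (∫ x in S₁, f x ∂μ) (∫ x in S₂, f x ∂μ))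
    {ε : ℝ} (hε : 0 < ε) :
    ∃ K : Set E, IsCompact K ∧ Convex ℝ K ∧
      D * ∫ x in K ∩ S₃, f x ∂μ < δ * min (∫ x in K ∩ S₁, f x ∂μ) (∫ x in K ∩ S₂, f x ∂μ) ∧
      ∃ e : E, ‖e‖ = 1 ∧ ∀ x ∈ K, ∀ y ∈ K, dist x y < |⟪e, x⟫ - ⟪e, y⟫| + ε := by
  let g (S : Set E) (x : E) : ℝ := δ * S.indicator f x - D * S₃.indicator f x
  have hleft {S : Set E} (hS : MeasurableSet S) : Integrable (fun x ↦ δ * S.indicator f x) μ :=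
    (hint.indicator hS).const_mul δ
  have hright : Integrable (fun x ↦ D * S₃.indicator f x) μ := (hint.indicator hS₃).const_mul D
  have hg {S : Set E} (hS : MeasurableSet S) (K : Set E) :
      ∫ x in K, g S x ∂μ = δ * (∫ x in K ∩ S, f x ∂μ) - D * ∫ x in K ∩ S₃, f x ∂μ := by
    rw [integral_sub (hleft hS).restrict hright.restrict, integral_const_mul, integral_const_mul,
      setIntegral_indicator hS, setIntegral_indicator hS₃]
  have hg₀ {S : Set E} (hS : MeasurableSet S) :
      ∫ x in K₀, g S x ∂μ = δ * (∫ x in S, f x ∂μ) - D * ∫ x in S₃, f x ∂μ := by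
    rw [setIntegral_eq_integral_of_forall_compl_eq_zero, ← setIntegral_univ, hg hS, univ_inter,
      univ_inter]
    intro x hx
    simp [g, indicator, Function.notMem_support.1 (notMem_subset hsupp hx)]
  rw [mul_min_of_nonneg _ _ hδ, lt_min_iff] at hlt
  obtain ⟨K, hK, hKconv, hK₁, hK₂, hthin⟩ := exists_needle_setIntegral_pos
    ((hleft hS₁).sub hright) ((hleft hS₂).sub hright) hK₀ hconv
    ((sub_pos.2 hlt.1).trans_eq (hg₀ hS₁).symm) ((sub_pos.2 hlt.2).trans_eq (hg₀ hS₂).symm) hε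
  refine ⟨K, hK, hKconv, ?_, hthin⟩
  rw [mul_min_of_nonneg _ _ hδ, lt_min_iff]
  exact ⟨sub_pos.1 (hK₁.trans_eq (hg hS₁ K)), sub_pos.1 (hK₂.trans_eq (hg hS₂ K))⟩

theorem mul_min_setIntegral_inter_le_of_inner_separated {m : ℕ}
    (hE : Module.finrank ℝ E = m + 1) (hf : ∀ x, 0 ≤ f x) (hint : Integrable f)
    (hconc : AffinePowQuasiconcave m fun x ↦ ENNReal.ofReal (f x))
    (hdiam : ∀ x ∈ Function.support f, ∀ y ∈ Function.support f, dist x y ≤ D)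
    (hS₁ : MeasurableSet S₁) (hS₂ : MeasurableSet S₂) {K : Set E} (hK : MeasurableSet K)
    (hKconv : Convex ℝ K) {e : E} (he : ‖e‖ = 1) (hδ : 0 ≤ δ) (hD : 0 ≤ D)
    (hsep : ∀ x ∈ K ∩ S₁, ∀ y ∈ K ∩ S₂, δ ≤ |⟪e, x⟫ - ⟪e, y⟫|) :
    δ * min (∫ x in K ∩ S₁, f x) (∫ x in K ∩ S₂, f x) ≤ D * ∫ x in K ∩ (S₁ ∪ S₂)ᶜ, f x := by
  have hsupp : Function.support (K.indicator fun x ↦ ENNReal.ofReal (f x)) ⊆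
      K ∩ Function.support f := by
    rw [support_indicator]
    gcongr
    intro x hx
    contrapose! hx
    simp_all
  have hineq := mul_min_setLIntegral_le_of_inner_separated hE he (hconc.indicator hKconv) hS₁ hS₂
    (δ := ENNReal.ofReal δ) (D := ENNReal.ofReal D)
    (fun x hx y hy ↦ by
      rw [edist_dist, Real.dist_eq]
      exact ENNReal.ofReal_le_ofReal (hsep x ⟨(hsupp hx.2).1, hx.1⟩ y ⟨(hsupp hy.2).1, hy.1⟩))
    (fun x hx y hy ↦ by
      rw [edist_dist, Real.dist_eq, ← inner_sub_right]
      refine ENNReal.ofReal_le_ofReal ((abs_real_inner_le_norm e _).trans ?_)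
      rw [he, one_mul, ← dist_eq_norm]
      exact hdiam x (hsupp hx).2 y (hsupp hy).2)
  have hofReal (S : Set E) : ∫⁻ x in S, K.indicator (fun x ↦ ENNReal.ofReal (f x)) x =
      ENNReal.ofReal (∫ x in K ∩ S, f x) := by
    rw [setLIntegral_indicator hK,
      ofReal_integral_eq_lintegral_ofReal hint.restrict (ae_of_all _ hf)]
  rwa [hofReal, hofReal, hofReal, ← ENNReal.ofReal_min, ← ENNReal.ofReal_mul hδ,
    ← ENNReal.ofReal_mul hD,
    ENNReal.ofReal_le_ofReal_iff (mul_nonneg hD (integral_nonneg hf))] at hineq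

theorem mul_min_setIntegral_le_of_separated (hf : ∀ x, 0 ≤ f x) (hint : Integrable f)
    (hconc : AffinePowQuasiconcave (Module.finrank ℝ E - 1) fun x ↦ ENNReal.ofReal (f x))
    (hdiam : ∀ x ∈ Function.support f, ∀ y ∈ Function.support f, dist x y ≤ D)
    (hS₁ : MeasurableSet S₁) (hS₂ : MeasurableSet S₂) (hsep : ∀ x ∈ S₁, ∀ y ∈ S₂, δ ≤ dist x y) :
    δ * min (∫ x in S₁, f x) (∫ x in S₂, f x) ≤ D * ∫ x in (S₁ ∪ S₂)ᶜ, f x := by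
  by_contra! hlt
  have hnonneg (S : Set E) : 0 ≤ ∫ x in S, f x := integral_nonneg hf
  obtain ⟨z, hz⟩ : ∃ z, f z ≠ 0 := by
    by_contra! hzero
    simp [hzero] at hlt
  have hD : 0 ≤ D := dist_nonneg.trans (hdiam z hz z hz)
  have hpos : 0 < δ * min (∫ x in S₁, f x) (∫ x in S₂, f x) :=
    (mul_nonneg hD (hnonneg _)).trans_lt hlt
  have hmin : 0 < min (∫ x in S₁, f x) (∫ x in S₂, f x) :=
    (le_min (hnonneg _) (hnonneg _)).lt_of_ne' (right_ne_zero_of_mul hpos.ne')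
  have hδ : 0 < δ := pos_of_mul_pos_left hpos hmin.le
  have : Nontrivial E := by
    have hne {S : Set E} (hS : 0 < ∫ x in S, f x) : S.Nonempty := by
      contrapose! hS
      simp [hS]
    obtain ⟨x, hx⟩ := hne (lt_min_iff.1 hmin).1
    obtain ⟨y, hy⟩ := hne (lt_min_iff.1 hmin).2
    exact ⟨x, y, dist_pos.1 (hδ.trans_le (hsep x hx y hy))⟩
  obtain ⟨δ', hδ', hδ'_lt⟩ := exists_between ((div_lt_iff₀ hmin).2 hlt)
  have hδ'_nonneg : 0 ≤ δ' := (div_nonneg (mul_nonneg hD (hnonneg _)) hmin.le).trans hδ'.le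
  obtain ⟨K, hK, hKconv, hKlt, e, he, hthin⟩ := exists_needle_lt_mul_min_setIntegral hint
    (isCompact_closedBall z D) (convex_closedBall z D) (fun x hx ↦ hdiam x hx z hz) hS₁ hS₂
    (hS₁.union hS₂).compl hδ'_nonneg ((div_lt_iff₀ hmin).1 hδ') (sub_pos.2 hδ'_lt)
  refine hKlt.not_ge (mul_min_setIntegral_inter_le_of_inner_separated
    (Nat.sub_add_cancel Module.finrank_pos).symm hf hint hconc hdiam hS₁ hS₂ hK.measurableSet hKconv
    he hδ'_nonneg hD fun x hx y hy ↦ ?_)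
  linarith [hthin x hx.1 y hy.1, hsep x hx.2 y hy.2]

theorem isoperimetry_of_linewise_unimodal_general (hf : ∀ x, 0 ≤ f x) (hint : Integrable f)
    (hconc : AffinePowQuasiconcave (Module.finrank ℝ E - 1) fun x ↦ ENNReal.ofReal (f x))
    (hD : 0 < D) (hdiam : ∀ x ∈ Function.support f, ∀ y ∈ Function.support f, dist x y ≤ D)
    (hS₁ : MeasurableSet S₁) (hS₂ : MeasurableSet S₂) {S₃ : Set E} (hcover : S₁ ∪ S₂ ∪ S₃ = univ)
    (hsep : ∀ x ∈ S₁, ∀ y ∈ S₂, δ ≤ dist x y) :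
    δ / D * min ((∫ x in S₁, f x) / ∫ x, f x) ((∫ x in S₂, f x) / ∫ x, f x) ≤
      (∫ x in S₃, f x) / ∫ x, f x := by
  have htotal : 0 ≤ ∫ x, f x := integral_nonneg hf
  have hcompl : ∫ x in (S₁ ∪ S₂)ᶜ, f x ≤ ∫ x in S₃, f x :=
    setIntegral_mono_set hint.integrableOn (ae_of_all _ hf)
      (compl_subset_iff_union.2 hcover).eventuallyLE
  rw [min_div_div_right htotal, ← mul_div_assoc, div_mul_eq_mul_div]
  refine div_le_div_of_nonneg_right (((div_le_iff₀' hD).2 ?_).trans hcompl) htotal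
  exact mul_min_setIntegral_le_of_separated hf hint hconc hdiam hS₁ hS₂ hsep

end Isoperimetry

theorem isoperimetry_of_linewise_unimodal {n : ℕ}
    (f : EuclideanSpace ℝ (Fin n) → ℝ)
    (hnn : ∀ x, 0 ≤ f x) (hint : Integrable f)
    (D : ℝ) (hD : 0 < D)
    (hdiam : ∀ x ∈ Function.support f, ∀ y ∈ Function.support f, dist x y ≤ D)
    (huni : ∀ a b : EuclideanSpace ℝ (Fin n), ∀ c d : ℝ,
      (∀ t ∈ Icc (0:ℝ) 1, 0 ≤ c + d * t) →
      ∃ tmax ∈ Icc (0:ℝ) 1,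
        MonotoneOn (fun t => f ((1 - t) • a + t • b) * (c + d * t) ^ (n - 1))
          (Icc 0 tmax) ∧
        AntitoneOn (fun t => f ((1 - t) • a + t • b) * (c + d * t) ^ (n - 1))
          (Icc tmax 1))
    (S₁ S₂ S₃ : Set (EuclideanSpace ℝ (Fin n)))
    (hm₁ : MeasurableSet S₁) (hm₂ : MeasurableSet S₂) (hm₃ : MeasurableSet S₃)
    (hcover : S₁ ∪ S₂ ∪ S₃ = univ)
    (hd₁₂ : Disjoint S₁ S₂) (hd₁₃ : Disjoint S₁ S₃) (hd₂₃ : Disjoint S₂ S₃)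
    (dd : ℝ) (hdd : 0 ≤ dd) (hsep : ∀ u ∈ S₁, ∀ v ∈ S₂, dd ≤ dist u v) :
    (dd / D) * min ((∫ x in S₁, f x) / ∫ x, f x) ((∫ x in S₂, f x) / ∫ x, f x) ≤
      (∫ x in S₃, f x) / ∫ x, f x := by
  refine isoperimetry_of_linewise_unimodal_general hnn hint ?_ hD hdiam hm₁ hm₂ hcover hsep
  simpa only [finrank_euclideanSpace_fin] using affinePowQuasiconcave_ofReal_of_unimodal hnn huni
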